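/- Let m ≥ 2, d ≥ 1 be integers and W a d×d complex matrix. Let 𝒪_{m−1} be the (m−1)d × (m−1)d complex matrix which, as an (m−1)×(m−1) block matrix with d×d blocks, has diagonal blocks 2I, blocks −I − iW directly above the diagonal, blocks −I + iW directly below the diagonal, and zero blocks elsewhere. Then det 𝒪_{m−1} = det( Σ_{ℓ=0}^{⌊(m−1)/2⌋} C(m, 2ℓ+1) (−1)^ℓ W^{2ℓ} ), where C(m,k) is the binomial coefficient. -/

import Mathlib

open Complex

/-- The `(m−1)d × (m−1)d` block-tridiagonal matrix `𝒪_{m−1}` with diagonal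
blocks `2I`, blocks `−I − iW` directly above the diagonal and `−I + iW`
directly below the diagonal. -/
noncomputable def calO (m d : ℕ) (W : Matrix (Fin d) (Fin d) ℂ) :
    Matrix (Fin (m - 1) × Fin d) (Fin (m - 1) × Fin d) ℂ :=
  fun p q =>
    if p.1 = q.1 then (if p.2 = q.2 then 2 else 0)
    else if (p.1 : ℕ) + 1 = (q.1 : ℕ) then
      -(if p.2 = q.2 then 1 else 0) - Complex.I * W p.2 q.2
    else if (q.1 : ℕ) + 1 = (p.1 : ℕ) then
      -(if p.2 = q.2 then 1 else 0) + Complex.I * W p.2 q.2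
    else 0

/-! All blocks are polynomials in the single matrix `A = iW`, so the determinant can be computed in
two stages: first over the commutative ring `R[X]`, then, after substituting `A` for `X`, over `R`.
The determinants `D n` of the `n × n` tridiagonal matrices over `R[X]` with `2` on the diagonal,
`-1 - X` above it and `-1 + X` below it satisfy `D (n + 2) = 2 * D (n + 1) - (1 - X ^ 2) * D n`.
The characteristic roots are `1 ± X`, so `D n` is the odd half
`((1 + X) ^ (n + 1) - (1 - X) ^ (n + 1)) / (2 * X)` of a binomial expansion. -/

section TridiagonalToeplitz

/-- The `n × n` tridiagonal Toeplitz matrix with `b` on the diagonal, `a` directly above and `c`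
directly below it. The entries may be taken in any type with a zero, so that they can themselves be
square matrices. -/
def tridiagonalToeplitz {R : Type*} [Zero R] (n : ℕ) (b a c : R) : Matrix (Fin n) (Fin n) R :=
  Matrix.of fun i j =>
    if i = j then b else if (i : ℕ) + 1 = j then a else if (j : ℕ) + 1 = i then c else 0

theorem tridiagonalToeplitz_submatrix_succ_succ {R : Type*} [Zero R] (n : ℕ) (b a c : R) :
    (tridiagonalToeplitz (n + 1) b a c).submatrix Fin.succ Fin.succ =
      tridiagonalToeplitz n b a c := by
  ext i j
  simp [tridiagonalToeplitz]

theorem tridiagonalToeplitz_map {R S F : Type*} [Zero R] [Zero S] [FunLike F R S]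
    [ZeroHomClass F R S] (f : F) (n : ℕ) (b a c : R) :
    (tridiagonalToeplitz n b a c).map f = tridiagonalToeplitz n (f b) (f a) (f c) := by
  ext i j
  simp only [tridiagonalToeplitz, Matrix.map_apply, Matrix.of_apply, apply_ite f, map_zero]

variable {R : Type*} [CommRing R]

theorem det_tridiagonalToeplitz_submatrix_succ_succAbove_one (n : ℕ) (b a c : R) :
    ((tridiagonalToeplitz (n + 2) b a c).submatrix Fin.succ (Fin.succAbove 1)).det =
      c * (tridiagonalToeplitz n b a c).det := by
  have minor_eq : ((tridiagonalToeplitz (n + 2) b a c).submatrix Fin.succ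
      (Fin.succAbove 1)).submatrix (Fin.succAbove 0) Fin.succ = tridiagonalToeplitz n b a c := by
    ext i j
    simp [tridiagonalToeplitz]
  rw [Matrix.det_succ_column_zero, Fin.sum_univ_succ, Finset.sum_eq_zero, minor_eq]
  · simp [tridiagonalToeplitz]
  · intro i _
    simp [tridiagonalToeplitz, Fin.ext_iff]

theorem det_tridiagonalToeplitz_add_two (n : ℕ) (b a c : R) :
    (tridiagonalToeplitz (n + 2) b a c).det =
      b * (tridiagonalToeplitz (n + 1) b a c).det -
        a * c * (tridiagonalToeplitz n b a c).det := by
  have entry_zero : tridiagonalToeplitz (n + 2) b a c 0 0 = b := by simp [tridiagonalToeplitz]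
  have entry_one : tridiagonalToeplitz (n + 2) b a c 0 1 = a := by simp [tridiagonalToeplitz]
  have entry_add_two (i : Fin n) : tridiagonalToeplitz (n + 2) b a c 0 i.succ.succ = 0 := by
    simp [tridiagonalToeplitz, Fin.ext_iff]
  rw [Matrix.det_succ_row_zero, Fin.sum_univ_succ, Fin.sum_univ_succ, Finset.sum_eq_zero,
    Fin.succAbove_zero, tridiagonalToeplitz_submatrix_succ_succ, Fin.succ_zero_eq_one,
    det_tridiagonalToeplitz_submatrix_succ_succAbove_one, entry_zero, entry_one]
  · simp only [Fin.val_zero, Fin.val_one, pow_zero, pow_one]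
    ring
  · intro i _
    rw [entry_add_two, mul_zero, zero_mul]

theorem det_comp_tridiagonalToeplitz {S ι : Type*} [CommRing S] [Fintype ι] [DecidableEq ι]
    (f : R →+* Matrix ι ι S) (n : ℕ) (b a c : R) :
    (Matrix.comp _ _ _ _ _ (tridiagonalToeplitz n (f b) (f a) (f c))).det =
      (f (tridiagonalToeplitz n b a c).det).det := by
  rw [← tridiagonalToeplitz_map, Matrix.det_det]

end TridiagonalToeplitz

section OddBinomialSum

variable {R : Type*} [Semiring R]

/-- The odd half of a binomial expansion: if `c = x ^ 2` and `m ≤ 2 * N`, then `2 * x` times this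
sum is `(1 + x) ^ m - (1 - x) ^ m`. The cut-off `N` is a free parameter, so that the sums for
consecutive `m` can be compared over the same range. -/
def oddBinomialSum (c : R) (m N : ℕ) : R :=
  ∑ l ∈ Finset.range N, (m.choose (2 * l + 1) : R) * c ^ l

theorem oddBinomialSum_succ_right (c : R) {m N : ℕ} (h : m ≤ 2 * N) :
    oddBinomialSum c m (N + 1) = oddBinomialSum c m N := by
  simp [oddBinomialSum, Finset.sum_range_succ, Nat.choose_eq_zero_of_lt (show m < 2 * N + 1 by lia)]

theorem oddBinomialSum_one (c : R) (N : ℕ) : oddBinomialSum c 1 (N + 1) = 1 := by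
  simp [oddBinomialSum, Finset.sum_range_succ', Nat.choose_eq_zero_of_lt]

theorem oddBinomialSum_two (c : R) (N : ℕ) : oddBinomialSum c 2 (N + 1) = 2 := by
  simp [oddBinomialSum, Finset.sum_range_succ', Nat.choose_eq_zero_of_lt]

end OddBinomialSum

theorem oddBinomialSum_add_two {R : Type*} [CommRing R] (c : R) (m N : ℕ) :
    oddBinomialSum c (m + 2) (N + 1) =
      2 * oddBinomialSum c (m + 1) (N + 1) - oddBinomialSum c m (N + 1) +
        c * oddBinomialSum c m N := by
  have pascal (l : ℕ) : ((m + 2).choose (2 * (l + 1) + 1) : R) =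
      2 * (m + 1).choose (2 * (l + 1) + 1) - m.choose (2 * (l + 1) + 1) +
        m.choose (2 * l + 1) := by
    simp only [mul_add, Nat.choose_succ_succ', Nat.cast_add]
    ring
  have shift (l : ℕ) : ((m + 2).choose (2 * (l + 1) + 1) : R) * c ^ (l + 1) =
      2 * ((m + 1).choose (2 * (l + 1) + 1) * c ^ (l + 1)) -
        m.choose (2 * (l + 1) + 1) * c ^ (l + 1) + c * (m.choose (2 * l + 1) * c ^ l) := by
    rw [pascal]
    ring
  simp only [oddBinomialSum, Finset.sum_range_succ' _ N, shift, Finset.sum_add_distrib,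
    Finset.sum_sub_distrib, ← Finset.mul_sum]
  simp only [mul_zero, zero_add, Nat.choose_one_right, Nat.cast_add, Nat.cast_ofNat,
    Nat.cast_one, pow_zero, mul_one]
  ring

theorem det_tridiagonalToeplitz_eq_oddBinomialSum {R : Type*} [CommRing R] (x : R) (n N : ℕ)
    (h : n + 1 ≤ 2 * N) :
    (tridiagonalToeplitz n 2 (-1 - x) (-1 + x)).det = oddBinomialSum (x ^ 2) (n + 1) N := by
  obtain ⟨k, rfl⟩ : ∃ k, N = k + 1 := ⟨N - 1, by lia⟩
  induction n using Nat.twoStepInduction generalizing k with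
  | zero => simp [oddBinomialSum_one]
  | one => simp [tridiagonalToeplitz, oddBinomialSum_two]
  | more n ih₀ ih₁ =>
    have sum_stable := oddBinomialSum_succ_right (x ^ 2) (show n + 1 ≤ 2 * k by lia)
    rw [det_tridiagonalToeplitz_add_two, ih₀ k (by lia), ih₁ k (by lia),
      oddBinomialSum_add_two _ (n + 1), sum_stable]
    ring

theorem calO_eq_comp_tridiagonalToeplitz (m d : ℕ) (W : Matrix (Fin d) (Fin d) ℂ) :
    calO m d W =
      Matrix.comp _ _ _ _ _ (tridiagonalToeplitz (m - 1) 2 (-1 - I • W) (-1 + I • W)) := by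
  ext ⟨i, k⟩ ⟨j, l⟩
  simp only [calO, tridiagonalToeplitz, Matrix.comp_apply, Matrix.of_apply]
  split_ifs <;> simp_all [Matrix.ofNat_apply]

theorem I_smul_pow_two_mul {B : Type*} [Semiring B] [Algebra ℂ B] (w : B) (l : ℕ) :
    (I • w) ^ (2 * l) = (-1 : ℂ) ^ l • w ^ (2 * l) := by
  rw [smul_pow, pow_mul, I_sq]

open Polynomial in
theorem det_calO_eq_det_poly_general {R ι : Type*} [CommRing R] [Fintype ι] [DecidableEq ι]
    (n : ℕ) (A : Matrix ι ι R) :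
    (Matrix.comp _ _ _ _ _ (tridiagonalToeplitz n 2 (-1 - A) (-1 + A))).det =
      (∑ l ∈ Finset.range (n / 2 + 1), (n + 1).choose (2 * l + 1) • A ^ (2 * l)).det := by
  have det_comp_eq := det_comp_tridiagonalToeplitz (aeval (R := R) A : R[X] →+* Matrix ι ι R) n
    2 (-1 - X) (-1 + X)
  rw [det_tridiagonalToeplitz_eq_oddBinomialSum _ n (n / 2 + 1) (by lia)] at det_comp_eq
  have aeval_two : aeval A (2 : R[X]) = 2 := map_ofNat _ 2
  simpa [oddBinomialSum, ← pow_mul, aeval_two] using det_comp_eq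

/-- **Proposition B.1.** The determinant of the block-tridiagonal matrix
`𝒪_{m−1}` equals the determinant of the `d×d` matrix
`Σ_{ℓ=0}^{⌊(m−1)/2⌋} C(m, 2ℓ+1) (−1)^ℓ W^{2ℓ}`. -/
theorem det_calO_eq_det_poly (m d : ℕ) (hm : 2 ≤ m) (hd : 1 ≤ d)
    (W : Matrix (Fin d) (Fin d) ℂ) :
    (calO m d W).det =
      (∑ ℓ ∈ Finset.range ((m - 1) / 2 + 1),
        ((m.choose (2 * ℓ + 1) : ℂ) * (-1 : ℂ) ^ ℓ) • W ^ (2 * ℓ)).det := by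
  rw [calO_eq_comp_tridiagonalToeplitz, det_calO_eq_det_poly_general, Nat.sub_add_cancel (by lia)]
  simp only [I_smul_pow_two_mul, mul_smul, Nat.cast_smul_eq_nsmul]
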